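/- arXiv:0907.0729 — 6 statements merged into one kernel-verified Lean document; each statement's English description precedes it below -/
import Mathlib

section
/- Let G, H and K be arbitrary groups. Then there exists an injective group homomorphism (G ≀ H) ≀ K →* G ≀ (H ≀ K); in particular (G ≀ H) ≀ K is isomorphic to a subgroup of G ≀ (H ≀ K). Concretely, the map Φ(φ, x) = (α_φ, (φ₂, x)) is such an embedding, where for φ : K → G ≀ H we write φ(k) = (φ₁(k), φ₂(k)) with φ₁(k) : H → G and φ₂(k) ∈ H, and α_φ : H ≀ K → G is defined by α_φ(h̃, k) = φ₁(k)(h̃(k)). -/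
/-!
The map `Φ (φ, x) = (α_φ, (φ₂, x))` is multiplicative because left translation by `(φ₂, x)⁻¹` on
`H ≀ K` carries evaluation `(f, k) ↦ f k` to `(f, k) ↦ (φ₂ k)⁻¹ * f k`, which is how `φ₂ k` acts on
functions `H → G`. It is injective because every `(a, k)` in `H × K` has the form `(f k, k)`, with
`f` constant, so that `α_φ` determines all values `φ₁ k a`.
-/

/-- The action of `H` on the group of functions `H → G`, given by
`(h • f) k = f (h⁻¹ * k)`. -/
def wreathMulAut (G H : Type*) [Group G] [Group H] : H →* MulAut (H → G) where
  toFun h :=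
    { toFun := fun f k => f (h⁻¹ * k)
      invFun := fun f k => f (h * k)
      left_inv := fun f => by funext k; simp [← mul_assoc]
      right_inv := fun f => by funext k; simp [← mul_assoc]
      map_mul' := fun f g => rfl }
  map_one' := by
    ext f k
    simp
  map_mul' := fun a b => by
    ext f k
    simp [mul_assoc]

/-- The (regular) wreath product `G ≀ H`, i.e. the semidirect product
`(H → G) ⋊ H` where `H` acts on `H → G` by `(h • f) k = f (h⁻¹ * k)`, with
multiplication `(f, h) * (f', h') = (f * (h • f'), h * h')`. -/
abbrev Wreath (G H : Type*) [Group G] [Group H] :=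
  (H → G) ⋊[wreathMulAut G H] H

/-- For arbitrary groups `G`, `H`, `K`, there is an injective group
homomorphism `(G ≀ H) ≀ K →* G ≀ (H ≀ K)`; concretely, the map
`Φ (φ, x) = (α_φ, (φ₂, x))`, where `φ k = (φ₁ k, φ₂ k)` and
`α_φ (h̃, k) = φ₁ k (h̃ k)`, is such an embedding.  In particular
`(G ≀ H) ≀ K` is isomorphic to a subgroup of `G ≀ (H ≀ K)`. -/
theorem wreath_wreath_embeds
    (G H K : Type*) [Group G] [Group H] [Group K] :
    ∃ Φ : Wreath (Wreath G H) K →* Wreath G (Wreath H K),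
      Function.Injective Φ ∧
        ∀ (φ : K → Wreath G H) (x : K),
          Φ ⟨φ, x⟩ =
            ⟨fun p : Wreath H K => (φ p.right).left (p.left p.right),
              ⟨fun k => (φ k).right, x⟩⟩ := by
  refine ⟨MonoidHom.mk' (fun w => ⟨fun p : Wreath H K => (w.left p.right).left (p.left p.right),
    ⟨fun k => (w.left k).right, w.right⟩⟩) ?_, ?_, fun _ _ => rfl⟩
  · rintro ⟨φ, x⟩ ⟨ψ, y⟩
    refine SemidirectProduct.ext ?_ rfl
    funext ⟨f, k⟩
    -- With `φ₂ k = (φ k).right`, the element `(φ₂, x)⁻¹ * (f, k)` has second component `x⁻¹ * k`,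
    -- and its first component takes the value `(φ₂ k)⁻¹ * f k` there.
    change (φ k).left (f k) * (ψ (x⁻¹ * k)).left ((φ k).right⁻¹ * f k) =
      (φ k).left (f k) * (ψ (x⁻¹ * k)).left
        ((φ (x⁻¹⁻¹ * (x⁻¹ * k))).right⁻¹ * f (x⁻¹⁻¹ * (x⁻¹ * k)))
    rw [inv_inv, mul_inv_cancel_left]
  · rintro ⟨φ, x⟩ ⟨ψ, y⟩ h
    have hl := congrArg SemidirectProduct.left h
    have hr := congrArg SemidirectProduct.right h
    refine SemidirectProduct.ext (funext fun k => SemidirectProduct.ext (funext fun a => ?_) ?_) ?_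
    -- The value `(φ k).left a` is read off at the pair consisting of the constant function `a`
    -- and `k`.
    · exact congrFun hl ⟨fun _ => a, k⟩
    · exact congrFun (congrArg SemidirectProduct.left hr) k
    · exact (SemidirectProduct.ext_iff.mp hr).2
end

section
/- Let G₁ and G₂ be groups and let π : G₁ ∗ G₂ → G₁ × G₂ be the canonical surjective group homomorphism from the free product to the direct product (the homomorphism restricting to the inclusion G_i ↪ G₁ × G₂ on each free factor). Then the kernel of π is a free group. -/
/-!
The kernel of `G₁ ∗ G₂ →* G₁ × G₂` is freely generated by the commutators
`c p q = q⁻¹ p⁻¹ q p` with `1 ≠ p ∈ G₁`, `1 ≠ q ∈ G₂`.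

Let `F` be the free group on the pairs `(p, q)` with `p ≠ 1`, `q ≠ 1`, and let
`f p q ∈ F` be the generator attached to `(p, q)`, or `1` if `p = 1` or `q = 1`. Sending `f p q`
to `c p q` gives a homomorphism `comm : F →* G₁ ∗ G₂`, whose image lies in the kernel. The group
`G₁ ∗ G₂` acts on `F × G₁ × G₂` by
`a • (z, p, q) = (z, a p, q)` for `a ∈ G₁` and
`b • (z, p, q) = (f p (b q) * (f p q)⁻¹ * z, p, b q)` for `b ∈ G₂`
(the left multiplication action, read through the transversal `p q` of the kernel).

* The action of `comm z` sends `(y, 1, 1)` to `(z y, 1, 1)`, so `comm` is injective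
  (`act_comm`).
* The map `(z, p, q) ↦ p q (comm z)` to `G₁ ∗ G₂` is equivariant, so if `w` sends `(1, 1, 1)` to
  `(z, p, q)` then `w = p q (comm z)`; if `w` lies in the kernel then `p = q = 1`, and
  `w = comm z` (`reconstruct_act`). Hence `comm` maps onto the kernel.
-/

open Monoid
open scoped Monoid.Coprod

namespace KerToProd

variable {G₁ G₂ : Type*} [Group G₁] [Group G₂]

variable (G₁ G₂) in
/-- The index set of the free basis: pairs of nontrivial elements. -/
abbrev Index : Type _ := {x : G₁ × G₂ // x.1 ≠ 1 ∧ x.2 ≠ 1}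

open Classical in
/-- The free generator attached to `(p, q)`, taken to be `1` when `p = 1` or `q = 1`. -/
noncomputable def gen (p : G₁) (q : G₂) : FreeGroup (Index G₁ G₂) :=
  if h : p ≠ 1 ∧ q ≠ 1 then FreeGroup.of ⟨(p, q), h⟩ else 1

@[simp] lemma gen_one_left (q : G₂) : gen (1 : G₁) q = 1 := by simp [gen]

@[simp] lemma gen_one_right (p : G₁) : gen p (1 : G₂) = 1 := by simp [gen]

lemma gen_index (i : Index G₁ G₂) : gen i.1.1 i.1.2 = FreeGroup.of i := by
  simp [gen, i.2.1, i.2.2]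

/-- The homomorphism from the free group to `G₁ ∗ G₂` sending the generator `(p, q)` to the
commutator `q⁻¹ p⁻¹ q p`. -/
noncomputable def comm : FreeGroup (Index G₁ G₂) →* G₁ ∗ G₂ :=
  FreeGroup.lift fun i =>
    (Coprod.inr i.1.2)⁻¹ * (Coprod.inl i.1.1)⁻¹ * Coprod.inr i.1.2 * Coprod.inl i.1.1

lemma comm_gen (p : G₁) (q : G₂) :
    comm (gen p q) =
      (Coprod.inr q)⁻¹ * (Coprod.inl p)⁻¹ * Coprod.inr q * Coprod.inl p := by
  by_cases hp : p = 1
  · simp [hp]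
  by_cases hq : q = 1
  · simp [hq]
  simp [gen, hp, hq, comm]

lemma toProd_comm (z : FreeGroup (Index G₁ G₂)) : Coprod.toProd (comm z) = 1 := by
  have h : (Coprod.toProd (M := G₁) (N := G₂)).comp comm = 1 := by
    ext i <;> simp [comm]
  exact DFunLike.congr_fun h z

/-- The action of the first factor on `F × G₁ × G₂`. -/
def actLeft : G₁ →* Equiv.Perm (FreeGroup (Index G₁ G₂) × G₁ × G₂) :=
  MonoidHom.toHomPerm
    { toFun := fun a s => (s.1, a * s.2.1, s.2.2)
      map_one' := by funext s; simp; rfl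
      map_mul' := fun a b => by funext s; simp [mul_assoc]; rfl }

/-- The action of the second factor on `F × G₁ × G₂`, twisted by the coboundary of `gen`. -/
noncomputable def actRight : G₂ →* Equiv.Perm (FreeGroup (Index G₁ G₂) × G₁ × G₂) :=
  MonoidHom.toHomPerm
    { toFun := fun b s => (gen s.2.1 (b * s.2.2) * (gen s.2.1 s.2.2)⁻¹ * s.1, s.2.1, b * s.2.2)
      map_one' := by funext s; simp; rfl
      map_mul' := fun a b => by
        funext s
        change _ = (gen s.2.1 (a * (b * s.2.2)) * (gen s.2.1 (b * s.2.2))⁻¹ *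
          (gen s.2.1 (b * s.2.2) * (gen s.2.1 s.2.2)⁻¹ * s.1), s.2.1, a * (b * s.2.2))
        simp [mul_assoc] }

/-- The action of `G₁ ∗ G₂` on `F × G₁ × G₂`. -/
noncomputable def act : G₁ ∗ G₂ →* Equiv.Perm (FreeGroup (Index G₁ G₂) × G₁ × G₂) :=
  Coprod.lift actLeft actRight

lemma act_inl (a : G₁) (s : FreeGroup (Index G₁ G₂) × G₁ × G₂) :
    act (Coprod.inl a) s = (s.1, a * s.2.1, s.2.2) := rfl

lemma act_inr (b : G₂) (s : FreeGroup (Index G₁ G₂) × G₁ × G₂) :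
    act (Coprod.inr b) s =
      (gen s.2.1 (b * s.2.2) * (gen s.2.1 s.2.2)⁻¹ * s.1, s.2.1, b * s.2.2) := rfl

lemma act_comm (z y : FreeGroup (Index G₁ G₂)) :
    act (comm z) (y, 1, 1) = (z * y, 1, 1) := by
  induction z using FreeGroup.induction_on generalizing y with
  | C1 => simp
  | of i =>
    rw [← gen_index, comm_gen]
    rw [← map_inv (Coprod.inl : G₁ →* G₁ ∗ G₂), ← map_inv (Coprod.inr : G₂ →* G₁ ∗ G₂)]
    simp only [map_mul, Equiv.Perm.mul_apply, act_inl, act_inr]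
    simp
  | inv_of i h =>
    rw [map_inv, map_inv, Equiv.Perm.inv_eq_iff_eq, h]
    simp
  | mul a b ha hb => simp [hb, ha, mul_assoc]

/-- The equivariant map `F × G₁ × G₂ → G₁ ∗ G₂`. -/
noncomputable def reconstruct (s : FreeGroup (Index G₁ G₂) × G₁ × G₂) : G₁ ∗ G₂ :=
  Coprod.inl s.2.1 * Coprod.inr s.2.2 * comm s.1

lemma reconstruct_act (w : G₁ ∗ G₂) (s : FreeGroup (Index G₁ G₂) × G₁ × G₂) :
    reconstruct (act w s) = w * reconstruct s := by
  induction w using Coprod.induction_on generalizing s with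
  | inl a => simp [act_inl, reconstruct, mul_assoc]
  | inr b =>
    simp only [act_inr, reconstruct, map_mul, map_inv, comm_gen]
    group
  | mul x y hx hy => rw [map_mul, Equiv.Perm.mul_apply, hx, hy, mul_assoc]

lemma comm_injective : Function.Injective (comm (G₁ := G₁) (G₂ := G₂)) := by
  intro x y h
  have hx := act_comm x 1
  rw [h, act_comm] at hx
  simpa using hx.symm

lemma exists_comm_eq (w : G₁ ∗ G₂) (hw : Coprod.toProd w = 1) : ∃ z, comm z = w := by
  have h := reconstruct_act w (1, 1, 1)
  generalize act w (1, 1, 1) = s at h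
  obtain ⟨z, p, q⟩ := s
  simp only [reconstruct, map_one, mul_one] at h
  have hpq : (p, q) = (1 : G₁ × G₂) := by
    rw [← hw, ← h]
    simp [toProd_comm]
  obtain ⟨rfl, rfl⟩ := Prod.mk.inj hpq
  exact ⟨z, by simpa using h⟩

end KerToProd

/-- The kernel of the canonical surjective homomorphism `G₁ ∗ G₂ →* G₁ × G₂`
from the free product to the direct product (which restricts to the canonical
inclusions on the two free factors) is a free group. -/
theorem ker_coprod_toProd_isFreeGroup
    (G₁ G₂ : Type*) [Group G₁] [Group G₂] :
    IsFreeGroup ↥(MonoidHom.ker (Coprod.toProd : G₁ ∗ G₂ →* G₁ × G₂)) := by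
  let φ : FreeGroup (KerToProd.Index G₁ G₂) →*
      ↥(MonoidHom.ker (Coprod.toProd : G₁ ∗ G₂ →* G₁ × G₂)) :=
    KerToProd.comm.codRestrict _ fun z => KerToProd.toProd_comm z
  have hφ : Function.Bijective φ := by
    constructor
    · intro x y h
      exact KerToProd.comm_injective (congrArg Subtype.val h)
    · rintro ⟨w, hw⟩
      obtain ⟨z, hz⟩ := KerToProd.exists_comm_eq w hw
      exact ⟨z, Subtype.ext hz⟩
  exact IsFreeGroup.ofMulEquiv (MulEquiv.ofBijective φ hφ)
end

section
/- Let G₁ and G₂ be groups, let π : G₁ ∗ G₂ → G₁ × G₂ be the canonical surjective homomorphism from the free product to the direct product, and let C be an infinite cyclic subgroup of G₁ × G₂, i.e. C is generated by an element of infinite order. Then the preimage π⁻¹(C), as a subgroup of G₁ ∗ G₂, is a free group. -/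
/-!
The proof is a groupoid version of the Kurosh subgroup theorem. Write `G = G₁ ∗ G₂` and let
`H` be the preimage of `C`. The group `H` is a vertex group of the action groupoid of `G` on
`X = G ⧸ H`, and Mathlib's Nielsen–Schreier machinery says that the vertex groups of a connected
free groupoid are free. So it suffices to see that this action groupoid is free.

Freeness of an action groupoid is expressed through its functors to groups `A`, that is, through
cocycles `c : K → X → A` (`IsCocycle`): the groupoid is free when some family of pairs
`(k e, s e)` has the property that cocycles can be prescribed on it arbitrarily and uniquely
(`HasFreeCocycles`).

* A cocycle on `G₁ ∗ G₂` is the same as a cocycle on `G₁` and a cocycle on `G₂`, so free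
  families for the two factors combine into one for the free product
  (`HasFreeCocycles.coprod`).
* For a group acting with free point stabilizers the action groupoid is free: each component is
  generated by a star joining a base point to all the other points, together with a basis of the
  stabilizer of the base point (`HasFreeCocycles.of_stabilizers`).
* The stabilizer in `Gᵢ` of the point `gH` consists of those `k` for which
  `π (g⁻¹ k g) ∈ C`. Since `π` is injective on `Gᵢ`, it embeds into `C ≅ ℤ`, hence is free.
-/

open Monoid
open scoped Monoid.Coprod
open CategoryTheory Equiv

universe u v w e a

section Cocycles

variable {K : Type u} [Group K] {X : Type w}

/-- `c` is a cocycle with values in `A` for the action `ρ` of `K` on `X`; equivalently, a functor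
from the action groupoid to `A`, sending the arrow `x ⟶ ρ k x` given by `k` to `c k x`. -/
def IsCocycle {A : Type a} [Group A] (ρ : K →* Perm X) (c : K → X → A) : Prop :=
  ∀ k l x, c (k * l) x = c k (ρ l x) * c l x

/-- The action groupoid of `ρ` is free: there is a family of arrows, the `e`-th one being given by
`k e` acting on `s e`, such that for every group `A` each `A`-valued labelling of the family
extends uniquely to a cocycle. -/
def HasFreeCocycles (ρ : K →* Perm X) : Prop :=
  ∃ (E : Type e) (k : E → K) (s : E → X), ∀ (A : Type a) [Group A] (f : E → A),
    ∃! c : K → X → A, IsCocycle ρ c ∧ ∀ i, c (k i) (s i) = f i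

theorem IsCocycle.one {A : Type a} [Group A] {ρ : K →* Perm X} {c : K → X → A}
    (hc : IsCocycle ρ c) (x : X) : c 1 x = 1 := by
  have h := hc 1 1 x
  simpa using h

/-- An action groupoid whose vertex groups are all free is free. -/
theorem HasFreeCocycles.of_stabilizers (ρ : K →* Perm X)
    (h : ∀ x : X, IsFreeGroup ((MulAction.stabilizer (Perm X) x).comap ρ)) :
    HasFreeCocycles.{u, w, max u w, a} ρ := by
  classical
  let S : X → Subgroup K := fun x => (MulAction.stabilizer (Perm X) x).comap ρ
  have hS : ∀ x k, k ∈ S x ↔ ρ k x = x := fun x k => Iff.rfl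
  -- base points `r x` of the orbits, and elements `t x` moving the base point to `x`
  obtain ⟨r, hr, hrr⟩ : ∃ r : X → X, (∀ x, ∃ k, ρ k (r x) = x) ∧ ∀ k x, r (ρ k x) = r x := by
    let R : Setoid X :=
      { r := fun x y => ∃ k, ρ k x = y
        iseqv :=
          { refl := fun x => ⟨1, by simp⟩
            symm := by
              rintro x y ⟨k, rfl⟩
              exact ⟨k⁻¹, by simp⟩
            trans := by
              rintro x y z ⟨k, rfl⟩ ⟨l, rfl⟩
              exact ⟨l * k, by simp⟩ } }
    refine ⟨fun x => (Quotient.mk R x).out, fun x => Quotient.mk_out (s := R) x, fun k x => ?_⟩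
    have : Quotient.mk R (ρ k x) = Quotient.mk R x := Quotient.sound (R.symm ⟨k, rfl⟩)
    simp only [this]
  have hidem : ∀ x, r (r x) = r x := by
    intro x
    obtain ⟨k, hk⟩ := hr x
    rw [← hrr k (r x), hk]
  obtain ⟨t, ht, ht1⟩ : ∃ t : X → K, (∀ x, ρ (t x) (r x) = x) ∧ ∀ x, r x = x → t x = 1 := by
    have : ∀ x, ∃ k, ρ k (r x) = x ∧ (r x = x → k = 1) := by
      intro x
      by_cases hx : r x = x
      · exact ⟨1, by simpa using hx, fun _ => rfl⟩
      · obtain ⟨k, hk⟩ := hr x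
        exact ⟨k, hk, fun h => absurd h hx⟩
    choose t ht using this
    exact ⟨t, fun x => (ht x).1, fun x => (ht x).2⟩
  have htinv : ∀ x, ρ (t x)⁻¹ x = r x := by
    intro x
    rw [map_inv, Perm.inv_eq_iff_eq, ht]
  have hmem : ∀ g y, (t (ρ g y))⁻¹ * g * t y ∈ S (r y) := by
    intro g y
    rw [hS, map_mul, map_mul, Perm.mul_apply, Perm.mul_apply, ht, htinv, hrr]
  refine ⟨{x // r x ≠ x} ⊕ Σ x : {x // r x = x}, IsFreeGroup.Generators (S x),
    Sum.elim (fun x => t x) (fun p => (IsFreeGroup.of p.2 : S p.1)),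
    Sum.elim (fun x => r x) (fun p => p.1), ?_⟩
  intro A _ f
  -- the values of the cocycle on the star and on the stabilizers of the base points
  let τ : X → A := fun x => if hx : r x = x then 1 else f (Sum.inl ⟨x, hx⟩)
  let φ : ∀ x, S x →* A := fun x =>
    IsFreeGroup.lift (fun i => if hx : r x = x then f (Sum.inr ⟨⟨x, hx⟩, i⟩) else 1)
  -- `ψ x` extends `φ x` by `1`, which avoids carrying membership proofs in the formula below
  let ψ : X → K → A := fun x k => if hk : k ∈ S x then φ x ⟨k, hk⟩ else 1
  have hψ : ∀ x k (hk : k ∈ S x), ψ x k = φ x ⟨k, hk⟩ := fun x k hk => dif_pos hk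
  have hψmul : ∀ x k l, k ∈ S x → l ∈ S x → ψ x (k * l) = ψ x k * ψ x l := by
    intro x k l hk hl
    rw [hψ x k hk, hψ x l hl, hψ x _ (mul_mem hk hl), ← map_mul]
    rfl
  have hψone : ∀ x, ψ x 1 = 1 := by
    intro x
    rw [hψ x 1 (one_mem _)]
    exact map_one (φ x)
  have hτ : ∀ x, r x = x → τ x = 1 := fun x hx => dif_pos hx
  refine ⟨fun g y => τ (ρ g y) * ψ (r y) ((t (ρ g y))⁻¹ * g * t y) * (τ y)⁻¹, ⟨?_, ?_⟩, ?_⟩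
  · intro k l x
    have h1 := hmem k (ρ l x)
    rw [hrr] at h1
    have h3 : (t (ρ (k * l) x))⁻¹ * (k * l) * t x =
        ((t (ρ k (ρ l x)))⁻¹ * k * t (ρ l x)) * ((t (ρ l x))⁻¹ * l * t x) := by
      rw [map_mul, Perm.mul_apply]
      group
    simp only [hrr]
    rw [h3, hψmul _ _ _ h1 (hmem l x), map_mul, Perm.mul_apply]
    group
  · rintro (⟨x, hx⟩ | ⟨⟨x, hx⟩, i⟩)
    · simp only [Sum.elim_inl]
      rw [ht, hidem, ht1 (r x) (hidem x), hτ (r x) (hidem x)]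
      simp only [inv_mul_cancel, mul_one, hψone, inv_one]
      exact dif_neg hx
    · simp only [Sum.elim_inr]
      have hi : ρ (IsFreeGroup.of i : S x) x = x := (hS _ _).1 (IsFreeGroup.of i : S x).2
      rw [hi, hx, ht1 x hx, hτ x hx, hψ x _ (by simp)]
      simp only [inv_one, one_mul, mul_one]
      change φ x (IsFreeGroup.of i) = _
      simp only [φ, IsFreeGroup.lift_of]
      exact dif_pos hx
  · rintro c ⟨hc, hcf⟩
    have hcτ : ∀ x, c (t x) (r x) = τ x := by
      intro x
      by_cases hx : r x = x
      · rw [ht1 x hx, hc.one, hτ x hx]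
      · rw [show τ x = _ from dif_neg hx]
        exact hcf (Sum.inl ⟨x, hx⟩)
    have hcφ : ∀ x, r x = x → ∀ k ∈ S x, c k x = ψ x k := by
      intro x hx k hk
      let χ : S x →* A :=
        { toFun := fun k => c k x
          map_one' := hc.one x
          map_mul' := by
            rintro ⟨k, hk⟩ ⟨l, hl⟩
            change c (k * l) x = c k x * c l x
            rw [hc, (hS x l).1 hl] }
      have : χ = φ x := by
        apply IsFreeGroup.ext_hom
        intro i
        simp only [φ, IsFreeGroup.lift_of]
        rw [dif_pos hx]
        exact hcf (Sum.inr ⟨⟨x, hx⟩, i⟩)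
      rw [hψ x k hk, ← this]
      rfl
    funext g y
    have h1 : g * t y = t (ρ g y) * ((t (ρ g y))⁻¹ * g * t y) := by group
    have h2 := hc g (t y) (r y)
    rw [h1, hc, (hS _ _).1 (hmem g y), ht, hcτ y, hcφ _ (hidem y) _ (hmem g y), ← hrr g y,
      hcτ, hrr] at h2
    rw [h2, mul_inv_cancel_right]

end Cocycles

section Coprod

variable {G₁ : Type u} {G₂ : Type v} [Group G₁] [Group G₂] {X : Type w}

/-- A cocycle for `ρ` makes `K` act on `X × A` by `k • (x, b) = (ρ k x, c k x * b)`. This turns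
cocycles into homomorphisms, to which the universal property of the free product applies. -/
def IsCocycle.permHom {K : Type u} [Group K] {A : Type a} [Group A] {ρ : K →* Perm X}
    {c : K → X → A} (hc : IsCocycle ρ c) : K →* Perm (X × A) :=
  letI : MulAction K (X × A) :=
    { smul := fun k p => (ρ k p.1, c k p.1 * p.2)
      one_smul := fun p => by
        change (ρ 1 p.1, c 1 p.1 * p.2) = p
        simp [hc.one]
      mul_smul := fun k l p => by
        change (ρ (k * l) p.1, c (k * l) p.1 * p.2) = (ρ k (ρ l p.1), c k (ρ l p.1) * (c l p.1 * p.2))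
        rw [hc, map_mul, mul_assoc]
        rfl }
  MulAction.toPermHom K (X × A)

theorem IsCocycle.permHom_apply {K : Type u} [Group K] {A : Type a} [Group A] {ρ : K →* Perm X}
    {c : K → X → A} (hc : IsCocycle ρ c) (k : K) (p : X × A) :
    hc.permHom k p = (ρ k p.1, c k p.1 * p.2) := rfl

/-- Cocycles on the two factors glue to a cocycle on the free product. -/
theorem IsCocycle.exists_coprod {A : Type a} [Group A] {ρ : G₁ ∗ G₂ →* Perm X}
    {c₁ : G₁ → X → A} {c₂ : G₂ → X → A} (h₁ : IsCocycle (ρ.comp Coprod.inl) c₁)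
    (h₂ : IsCocycle (ρ.comp Coprod.inr) c₂) :
    ∃ c : G₁ ∗ G₂ → X → A, IsCocycle ρ c ∧ (∀ k, c (Coprod.inl k) = c₁ k) ∧
      ∀ k, c (Coprod.inr k) = c₂ k := by
  let Φ : G₁ ∗ G₂ →* Perm (X × A) := Coprod.lift h₁.permHom h₂.permHom
  -- the lifted action still covers `ρ` and commutes with right translation on `A`
  have key : ∀ g x b, Φ g (x, b) = (ρ g x, (Φ g (x, 1)).2 * b) := by
    intro g
    induction g using Coprod.induction_on with
    | inl k =>
      intro x b
      simp [Φ, IsCocycle.permHom_apply]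
    | inr k =>
      intro x b
      simp [Φ, IsCocycle.permHom_apply]
    | mul g g' hg hg' =>
      intro x b
      rw [map_mul, map_mul, Perm.mul_apply, Perm.mul_apply, Perm.mul_apply, hg' x b, hg' x 1, hg,
        hg _ (_ * 1)]
      simp [mul_assoc]
  refine ⟨fun g x => (Φ g (x, 1)).2, ?_, ?_, ?_⟩
  · intro k l x
    change (Φ (k * l) (x, 1)).2 = _
    rw [map_mul, Perm.mul_apply, key l x 1, key k]
    simp
  · intro k
    funext x
    simp [Φ, IsCocycle.permHom_apply]
  · intro k
    funext x
    simp [Φ, IsCocycle.permHom_apply]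

theorem IsCocycle.ext_coprod {A : Type a} [Group A] {ρ : G₁ ∗ G₂ →* Perm X}
    {c d : G₁ ∗ G₂ → X → A} (hc : IsCocycle ρ c) (hd : IsCocycle ρ d)
    (h₁ : ∀ k, c (Coprod.inl k) = d (Coprod.inl k))
    (h₂ : ∀ k, c (Coprod.inr k) = d (Coprod.inr k)) : c = d := by
  funext g
  induction g using Coprod.induction_on with
  | inl k => exact h₁ k
  | inr k => exact h₂ k
  | mul g g' hg hg' =>
    funext x
    rw [hc, hd, hg', hg]

/-- The action groupoid of a free product is free if those of the two factors are. -/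
theorem HasFreeCocycles.coprod {ρ : G₁ ∗ G₂ →* Perm X}
    (h₁ : HasFreeCocycles.{u, w, e, a} (ρ.comp Coprod.inl))
    (h₂ : HasFreeCocycles.{v, w, e, a} (ρ.comp Coprod.inr)) :
    HasFreeCocycles.{max u v, w, e, a} ρ := by
  obtain ⟨E₁, k₁, s₁, H₁⟩ := h₁
  obtain ⟨E₂, k₂, s₂, H₂⟩ := h₂
  refine ⟨E₁ ⊕ E₂, Sum.elim (fun i => Coprod.inl (k₁ i)) (fun i => Coprod.inr (k₂ i)),
    Sum.elim s₁ s₂, ?_⟩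
  intro A _ f
  obtain ⟨c₁, ⟨hc₁, hf₁⟩, hu₁⟩ := H₁ A (fun i => f (Sum.inl i))
  obtain ⟨c₂, ⟨hc₂, hf₂⟩, hu₂⟩ := H₂ A (fun i => f (Sum.inr i))
  obtain ⟨c, hc, hl, hr⟩ := hc₁.exists_coprod hc₂
  refine ⟨c, ⟨hc, ?_⟩, ?_⟩
  · rintro (i | i)
    · simpa [hl] using hf₁ i
    · simpa [hr] using hf₂ i
  · rintro d ⟨hd, hdf⟩
    have e₁ : (fun k => d (Coprod.inl k)) = c₁ := by
      refine hu₁ _ ⟨fun k l x => ?_, fun i => hdf (Sum.inl i)⟩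
      simpa using hd (Coprod.inl k) (Coprod.inl l) x
    have e₂ : (fun k => d (Coprod.inr k)) = c₂ := by
      refine hu₂ _ ⟨fun k l x => ?_, fun i => hdf (Sum.inr i)⟩
      simpa using hd (Coprod.inr k) (Coprod.inr l) x
    refine hd.ext_coprod hc (fun k => ?_) (fun k => ?_)
    · rw [hl]; exact congrFun e₁ k
    · rw [hr]; exact congrFun e₂ k

end Coprod

/-- `HasFreeCocycles` is freeness of the action groupoid in the sense of Mathlib. -/
theorem HasFreeCocycles.isFreeGroupoid {G X : Type u} [Group G] [MulAction G X]
    (h : HasFreeCocycles.{u, u, u, u} (MulAction.toPermHom G X)) :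
    Nonempty (IsFreeGroupoid (ActionCategory G X)) := by
  obtain ⟨E, k, s, H⟩ := h
  refine ⟨{
    quiverGenerators :=
      ⟨fun p q => { i : E // s i = ActionCategory.back (M := G) (X := X) p ∧
        k i • s i = ActionCategory.back (M := G) (X := X) q }⟩
    of := fun {p q} i => ⟨k i.1, by
      have h1 := i.2.1
      have h2 := i.2.2
      rw [h1] at h2
      exact h2⟩
    unique_lift := ?_ }⟩
  intro A _ f
  obtain ⟨c, ⟨hc, hcf⟩, hu⟩ := H A (fun i => f (a := ((s i : X) : ActionCategory G X))
    (b := ((k i • s i : X) : ActionCategory G X)) ⟨i, rfl, rfl⟩)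
  refine ⟨{ obj := fun _ => SingleObj.star A
            map := fun {p q} g => c g.val p.back
            map_id := fun p => hc.one _
            map_comp := ?_ }, ?_, ?_⟩
  · rintro ⟨⟨⟩, x : X⟩ ⟨⟨⟩, y : X⟩ ⟨⟨⟩, z : X⟩ ⟨g : G, hg : g • x = y⟩ ⟨g' : G, hg'⟩
    subst hg
    exact hc g' g x
  · rintro ⟨⟨⟩, x⟩ ⟨⟨⟩, y⟩ ⟨i, hi : s i = x, hi' : k i • s i = y⟩
    subst hi
    subst hi'
    exact hcf i
  · intro F hF
    let d : G → X → A := fun g x => F.map (X := ((x : X) : ActionCategory G X))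
      (Y := ((g • x : X) : ActionCategory G X)) ⟨g, rfl⟩
    have hdF : ∀ (x y : X) (g : G) (hg : g • x = y),
        d g x = F.map (X := ((x : X) : ActionCategory G X))
          (Y := ((y : X) : ActionCategory G X)) ⟨g, hg⟩ := by
      rintro x _ g rfl
      rfl
    have hd : d = c := by
      refine hu d ⟨fun g g' x => ?_, fun i =>
        hF ((s i : X) : ActionCategory G X) ((k i • s i : X) : ActionCategory G X) ⟨i, rfl, rfl⟩⟩
      rw [hdF x (g • g' • x) (g * g') (mul_smul _ _ _)]
      exact F.map_comp (X := ((x : X) : ActionCategory G X))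
        (Y := ((g' • x : X) : ActionCategory G X))
        (Z := ((g • g' • x : X) : ActionCategory G X)) ⟨g', rfl⟩ ⟨g, rfl⟩
    subst hd
    apply Functor.hext
    · intro
      apply Unit.ext
    · rintro ⟨⟨⟩, x : X⟩ ⟨⟨⟩, y : X⟩ ⟨g : G, hg : g • x = y⟩
      exact heq_of_eq (hdF x y g hg).symm

/-- `H` is the vertex group at the trivial coset of the connected action groupoid on `G ⧸ H`. -/
theorem HasFreeCocycles.isFreeGroup_subgroup {G : Type u} [Group G] {H : Subgroup G}
    (h : HasFreeCocycles.{u, u, u, u} (MulAction.toPermHom G (G ⧸ H))) : IsFreeGroup H := by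
  obtain ⟨_⟩ := h.isFreeGroupoid
  let p : ActionCategory G (G ⧸ H) := ActionCategory.objEquiv G (G ⧸ H) ((1 : G) : G ⧸ H)
  let : Group (End p) := End.group p
  -- the category structures from `ActionCategory` and from its groupoid instance agree only up
  -- to unfolding, so connectedness has to be passed by hand
  have hconn : CategoryTheory.IsConnected (ActionCategory G (G ⧸ H)) := inferInstance
  have hp : IsFreeGroup (End p) :=
    @IsFreeGroupoid.endIsFreeOfConnectedFree (ActionCategory G (G ⧸ H)) _ hconn _ p
  exact IsFreeGroup.ofMulEquiv (G := End p) (ActionCategory.endMulEquivSubgroup H)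

/-- A case of the Kurosh subgroup theorem: a subgroup `H` of a free product is free if all its
intersections with conjugates of the factors, which are the stabilizers of points of the coset
space under the two factors, are free. -/
theorem Subgroup.isFreeGroup_of_coprod {G₁ : Type u} {G₂ : Type v} [Group G₁] [Group G₂]
    (H : Subgroup (G₁ ∗ G₂))
    (h₁ : ∀ g : G₁ ∗ G₂, IsFreeGroup (H.comap ((MulAut.conj g).toMonoidHom.comp Coprod.inl)))
    (h₂ : ∀ g : G₁ ∗ G₂, IsFreeGroup (H.comap ((MulAut.conj g).toMonoidHom.comp Coprod.inr))) :
    IsFreeGroup H := by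
  have hst : ∀ g k : G₁ ∗ G₂, (g⁻¹ * k * g⁻¹⁻¹ ∈ H) ↔
      MulAction.toPermHom (G₁ ∗ G₂) ((G₁ ∗ G₂) ⧸ H) k (g : (G₁ ∗ G₂) ⧸ H) = g := by
    intro g k
    change _ ↔ ((k * g : G₁ ∗ G₂) : (G₁ ∗ G₂) ⧸ H) = g
    rw [eq_comm, QuotientGroup.eq, inv_inv, mul_assoc]
  have hfree : HasFreeCocycles.{max u v, max u v, max u v, max u v}
      (MulAction.toPermHom (G₁ ∗ G₂) ((G₁ ∗ G₂) ⧸ H)) := by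
    refine HasFreeCocycles.coprod (HasFreeCocycles.of_stabilizers _ fun x => ?_)
      (HasFreeCocycles.of_stabilizers _ fun x => ?_)
    · induction x using QuotientGroup.induction_on with
      | H g =>
        have := h₁ g⁻¹
        refine IsFreeGroup.ofMulEquiv (MulEquiv.subgroupCongr (Subgroup.ext fun k => ?_)
          (H := H.comap ((MulAut.conj g⁻¹).toMonoidHom.comp Coprod.inl)))
        exact hst g (Coprod.inl k)
    · induction x using QuotientGroup.induction_on with
      | H g =>
        have := h₂ g⁻¹
        refine IsFreeGroup.ofMulEquiv (MulEquiv.subgroupCongr (Subgroup.ext fun k => ?_)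
          (H := H.comap ((MulAut.conj g⁻¹).toMonoidHom.comp Coprod.inr)))
        exact hst g (Coprod.inr k)
  exact hfree.isFreeGroup_subgroup

theorem isFreeGroup_zpowers {G : Type u} [Group G] {x : G} (hx : ¬ IsOfFinOrder x) :
    IsFreeGroup (Subgroup.zpowers x) := by
  have hinj : Function.Injective (zpowersHom G x) := by
    intro m n h
    have := injective_zpow_iff_not_isOfFinOrder.2 hx
    exact Multiplicative.toAdd.injective (this (by simpa [zpowersHom_apply] using h))
  have hrange : (zpowersHom G x).range = Subgroup.zpowers x := by
    ext y
    simp [MonoidHom.mem_range, Subgroup.mem_zpowers_iff, zpowersHom_apply]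
  exact IsFreeGroup.ofMulEquiv
    ((FreeGroup.mulEquivIntOfUnique (α := Unit)).trans
      ((MonoidHom.ofInjective hinj).trans (MulEquiv.subgroupCongr hrange)))

/-- Nielsen–Schreier, for a preimage under an injective homomorphism. -/
theorem Subgroup.isFreeGroup_comap {K : Type u} {P : Type v} [Group K] [Group P] (C : Subgroup P)
    [IsFreeGroup C] (f : K →* P) (hf : Function.Injective f) : IsFreeGroup (C.comap f) := by
  have hinj : Function.Injective (f.subgroupComap C) := by
    intro k l h
    exact Subtype.ext (hf (congrArg Subtype.val h))
  exact IsFreeGroup.ofMulEquiv (MonoidHom.ofInjective hinj).symm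

/-- Let `π : G₁ ∗ G₂ →* G₁ × G₂` be the canonical surjective homomorphism from
the free product to the direct product, and let `C = ⟨x⟩` be an infinite
cyclic subgroup of `G₁ × G₂` (generated by an element `x` of infinite order).
Then the preimage `π⁻¹ C` is a free group. -/
theorem comap_infinite_cyclic_coprod_toProd_isFreeGroup
    (G₁ G₂ : Type*) [Group G₁] [Group G₂]
    (x : G₁ × G₂) (hx : ¬ IsOfFinOrder x) :
    IsFreeGroup
      ↥(Subgroup.comap (Coprod.toProd : G₁ ∗ G₂ →* G₁ × G₂)
        (Subgroup.zpowers x)) := by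
  have := isFreeGroup_zpowers hx
  refine Subgroup.isFreeGroup_of_coprod _ (fun g => ?_) (fun g => ?_)
  · rw [Subgroup.comap_comap]
    refine Subgroup.isFreeGroup_comap _ _ fun k l h => ?_
    simpa using h
  · rw [Subgroup.comap_comap]
    refine Subgroup.isFreeGroup_comap _ _ fun k l h => ?_
    simpa using h
end

section
/- Let G₁ and G₂ be countable groups, let π : G₁ ∗ G₂ → G₁ × G₂ be the canonical surjective homomorphism from the free product to the direct product, and let V be a virtually cyclic subgroup of G₁ × G₂ (i.e. V contains a cyclic subgroup of finite index). Then there exist a countable free group F and a finite group H such that π⁻¹(V) is isomorphic to a subgroup of the wreath product F ≀ H; that is, there is an injective group homomorphism π⁻¹(V) →* F ≀ H. -/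
open Monoid
open scoped Monoid.Coprod

/-- A group containing `D` acts on the cosets of `D` with stabilizers conjugate to `D`; if `D`
embeds into `ℤ`, this action carries a faithful cocycle with values in a free group. The
generator `none` receives the stabilizers, and `some x` labels the coset `x`. -/
theorem exists_faithful_cocycle {P : Type*} [Group P] (D : Subgroup P)
    (j : D →* Multiplicative ℤ) (hj : Function.Injective j) :
    ∃ c : P → P ⧸ D → FreeGroup (Option (P ⧸ D)),
      (∀ p q x, c (p * q) x = c p (q • x) * c q x) ∧ ∀ p x, c p x = 1 → p = 1 := by
  classical
  let σ : P ⧸ D → P := Quotient.out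
  have hσ (x : P ⧸ D) : ((σ x : P) : P ⧸ D) = x := Quotient.out_eq x
  have hmem (p : P) (x : P ⧸ D) : (σ (p • x))⁻¹ * (p * σ x) ∈ D := by
    rw [← QuotientGroup.eq, hσ]
    conv_lhs => rw [← hσ x]
    rfl
  let d (p : P) (x : P ⧸ D) : D := ⟨(σ (p • x))⁻¹ * (p * σ x), hmem p x⟩
  have hd (p q : P) (x : P ⧸ D) : d (p * q) x = d p (q • x) * d q x := by
    apply Subtype.ext
    simp only [d, Subgroup.coe_mul, mul_smul]
    group
  let z : FreeGroup (Option (P ⧸ D)) := FreeGroup.of none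
  let ζ : D →* FreeGroup (Option (P ⧸ D)) := (zpowersHom _ z).comp j
  have hζ (a : D) (ha : ζ a = 1) : a = 1 := by
    have h : z ^ (Multiplicative.toAdd (j a)) = 1 := ha
    -- The exponent sum is a homomorphism, so a trivial power of `z` has exponent zero.
    have h2 := congrArg
      (FreeGroup.lift fun _ : Option (P ⧸ D) => Multiplicative.ofAdd (1 : ℤ)) h
    rw [map_zpow, FreeGroup.lift_apply_of, MonoidHom.map_one, ← ofAdd_zsmul, smul_eq_mul,
      mul_one, ofAdd_toAdd] at h2
    exact hj (h2.trans (map_one j).symm)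
  let e (x : P ⧸ D) : FreeGroup (Option (P ⧸ D)) := FreeGroup.of (some x)
  refine ⟨fun p x => e (p • x) * ζ (d p x) * (e x)⁻¹, ?_, ?_⟩
  · intro p q x
    simp only [hd, map_mul, mul_smul]
    group
  · intro p x h
    have hx : p • x = x := by
      -- Killing the generator `none` leaves `e (p • x) * (e x)⁻¹ = 1`.
      have h2 := congrArg (FreeGroup.lift fun o : Option (P ⧸ D) =>
        o.elim (1 : FreeGroup (P ⧸ D)) FreeGroup.of) h
      simp only [map_mul, map_inv, e, ζ, z, MonoidHom.comp_apply, zpowersHom_apply, map_zpow,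
        FreeGroup.lift_apply_of, Option.elim, one_zpow, mul_one, map_one] at h2
      exact FreeGroup.of_injective (mul_inv_eq_one.mp h2)
    have hz : ζ (d p x) = 1 := by
      simp only [hx] at h
      simpa using h
    have h1 : (σ (p • x))⁻¹ * (p * σ x) = 1 := congrArg Subtype.val (hζ _ hz)
    rw [hx, inv_mul_eq_one] at h1
    simpa using h1.symm

/-- Nonempty reduced words in a free product are nontrivial. -/
theorem neWord_prod_ne_one {ι : Type*} {M : ι → Type*} [∀ i, Monoid (M i)] {i j : ι}
    (w : CoprodI.NeWord M i j) : w.prod ≠ 1 := by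
  classical
  intro h
  have h2 : w.toWord = CoprodI.Word.empty := by
    apply CoprodI.Word.equiv.symm.injective
    change w.toWord.prod = CoprodI.Word.empty.prod
    rw [CoprodI.Word.prod_empty]
    exact h
  exact w.toList_ne_nil (congrArg CoprodI.Word.toList h2)

/-- A faithful cocycle of `P` induces one of a free product mapping to `P`, as long as each free
factor injects into `P`. Distinct factors use distinct copies of the coefficient group, so
reduced words go to reduced words. -/
theorem exists_coprod_cocycle {ι P X N : Type*} {M : ι → Type*} [∀ i, Group (M i)] [Group P]
    [Group N] [MulAction P X] (θ : CoprodI M →* P)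
    (hθ : ∀ i, Function.Injective (θ.comp (CoprodI.of : M i →* _)))
    (c : P → X → N) (hc : ∀ p q x, c (p * q) x = c p (q • x) * c q x)
    (hc1 : ∀ p x, c p x = 1 → p = 1) :
    ∃ c' : CoprodI M → X → CoprodI (fun _ : ι => N),
      (∀ g g' x, c' (g * g') x = c' g (θ g' • x) * c' g' x) ∧ ∀ g x, c' g x = 1 → g = 1 := by
  classical
  have hone (x : X) : c 1 x = 1 := by
    have h := hc 1 1 x
    rw [one_smul, mul_one] at h
    exact left_eq_mul.mp h
  let Q := CoprodI (fun _ : ι => N)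
  let inc (i : ι) : N →* Q := CoprodI.of (M := fun _ : ι => N) (i := i)
  -- A cocycle with values in `Q` is an action on `X × Q` commuting with right translations.
  let act (i : ι) : M i →* Function.End (X × Q) :=
    { toFun := fun m y => (θ (CoprodI.of m) • y.1, inc i (c (θ (CoprodI.of m)) y.1) * y.2)
      map_one' := by
        funext y
        simp only [map_one, one_smul, hone, one_mul]
        rfl
      map_mul' := fun m m' => by
        funext y
        change _ = (_, _)
        simp only [map_mul, mul_smul, hc, mul_assoc] }
  let Φ : CoprodI M →* Function.End (X × Q) := CoprodI.lift act
  have hof (i : ι) (m : M i) (y : X × Q) : Φ (CoprodI.of m) y =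
      (θ (CoprodI.of m) • y.1, inc i (c (θ (CoprodI.of m)) y.1) * y.2) := by
    simp only [Φ, CoprodI.lift_of]
    rfl
  have hmul (g g' : CoprodI M) (y : X × Q) : Φ (g * g') y = Φ g (Φ g' y) := by
    rw [map_mul]
    rfl
  have key (g : CoprodI M) : ∀ x, ∃ r : Q, ∀ q, Φ g (x, q) = (θ g • x, r * q) := by
    induction g using CoprodI.induction_on with
    | one =>
      intro x
      refine ⟨1, fun q => ?_⟩
      rw [map_one, map_one, one_smul, one_mul]
      rfl
    | of i m => exact fun x => ⟨inc i (c (θ (CoprodI.of m)) x), fun q => hof i m (x, q)⟩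
    | mul g g' ih ih' =>
      intro x
      obtain ⟨r', hr'⟩ := ih' x
      obtain ⟨r, hr⟩ := ih (θ g' • x)
      exact ⟨r * r', fun q => by rw [hmul, hr', hr, map_mul, mul_smul, mul_assoc]⟩
  choose c' hc' using key
  have hval (g : CoprodI M) (x : X) (r : Q) (y : X) (h : Φ g (x, 1) = (y, r)) : c' g x = r := by
    rw [hc', mul_one] at h
    exact congrArg Prod.snd h
  refine ⟨c', fun g g' x => ?_, fun g x hg => ?_⟩
  · apply hval _ _ _ (θ g • θ g' • x)
    rw [hmul, hc', hc', mul_one]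
  · have hword {i j : ι} (w : CoprodI.NeWord M i j) : ∀ x,
        ∃ n : CoprodI.NeWord (fun _ : ι => N) i j, c' w.prod x = n.prod := by
      induction w with
      | singleton m hm =>
        intro x
        rename_i i
        have hne : c (θ (CoprodI.of m)) x ≠ 1 := fun h => hm (hθ i (by
          rw [map_one]
          exact hc1 _ _ h))
        refine ⟨.singleton _ hne, ?_⟩
        rw [CoprodI.NeWord.prod_singleton, CoprodI.NeWord.prod_singleton]
        apply hval _ _ _ (θ (CoprodI.of m) • x)
        rw [hof, mul_one]
      | append w₁ hne w₂ ih₁ ih₂ =>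
        intro x
        obtain ⟨n₂, h₂⟩ := ih₂ x
        obtain ⟨n₁, h₁⟩ := ih₁ (θ w₂.prod • x)
        refine ⟨.append n₁ hne n₂, ?_⟩
        rw [CoprodI.NeWord.append_prod, CoprodI.NeWord.append_prod, ← h₁, ← h₂]
        apply hval _ _ _ (θ w₁.prod • θ w₂.prod • x)
        rw [hmul, hc', hc', mul_one]
    by_contra hne
    have hw : CoprodI.Word.equiv g ≠ CoprodI.Word.empty := by
      intro h
      apply hne
      rw [← CoprodI.Word.equiv.symm_apply_apply g, h]
      exact CoprodI.Word.prod_empty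
    obtain ⟨i, j, w, hwg⟩ := CoprodI.NeWord.of_word _ hw
    have hg' : w.prod = g := by
      rw [← CoprodI.Word.equiv.symm_apply_apply g, ← hwg]
      rfl
    obtain ⟨n, hn⟩ := hword w x
    rw [hg', hg] at hn
    exact neWord_prod_ne_one n hn.symm

/-- The free product of copies of a free group, indexed by `ι`, embeds into a free group. -/
theorem exists_injective_coprodI_freeGroup (ι Y : Type*) :
    ∃ f : CoprodI (fun _ : ι => FreeGroup Y) →* FreeGroup (ι × Y), Function.Injective f := by
  let f : CoprodI (fun _ : ι => FreeGroup Y) →* FreeGroup (ι × Y) :=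
    CoprodI.lift fun i => FreeGroup.map (Prod.mk i)
  let b : FreeGroup (ι × Y) →* CoprodI (fun _ : ι => FreeGroup Y) :=
    FreeGroup.lift fun p => CoprodI.of (M := fun _ : ι => FreeGroup Y) (i := p.1) (.of p.2)
  have h : b.comp f = MonoidHom.id _ := by
    apply CoprodI.ext_hom
    intro i
    apply FreeGroup.ext_hom
    intro y
    simp [f, b]
  exact ⟨f, Function.LeftInverse.injective (g := b) fun x => DFunLike.congr_fun h x⟩

/-- The pair `(G₁, G₂)` as a family indexed by `Bool`. -/
abbrev boolFamily (G₁ G₂ : Type) (b : Bool) : Type := cond b G₁ G₂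

instance boolFamilyGroup (G₁ G₂ : Type) [Group G₁] [Group G₂] : ∀ b, Group (boolFamily G₁ G₂ b)
  | true => inferInstanceAs (Group G₁)
  | false => inferInstanceAs (Group G₂)

/-- The binary free product embeds into the indexed one, over the direct product. -/
theorem exists_coprod_to_coprodI (G₁ G₂ : Type) [Group G₁] [Group G₂] :
    ∃ (κ : G₁ ∗ G₂ →* CoprodI (boolFamily G₁ G₂)) (θ : CoprodI (boolFamily G₁ G₂) →* G₁ × G₂),
      Function.Injective κ ∧ (∀ g, θ (κ g) = Coprod.toProd g) ∧
      ∀ b, Function.Injective (θ.comp (CoprodI.of : boolFamily G₁ G₂ b →* _)) := by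
  let ι₁ : G₁ →* CoprodI (boolFamily G₁ G₂) :=
    CoprodI.of (M := boolFamily G₁ G₂) (i := true)
  let ι₂ : G₂ →* CoprodI (boolFamily G₁ G₂) :=
    CoprodI.of (M := boolFamily G₁ G₂) (i := false)
  let κ : G₁ ∗ G₂ →* CoprodI (boolFamily G₁ G₂) := Coprod.lift ι₁ ι₂
  let back : CoprodI (boolFamily G₁ G₂) →* G₁ ∗ G₂ := CoprodI.lift fun b =>
    match b with
    | true => (Coprod.inl : G₁ →* G₁ ∗ G₂)
    | false => (Coprod.inr : G₂ →* G₁ ∗ G₂)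
  have h₁ (x : G₁) : back (ι₁ x) = Coprod.inl x :=
    CoprodI.lift_of (M := boolFamily G₁ G₂) _ (i := true) x
  have h₂ (x : G₂) : back (ι₂ x) = Coprod.inr x :=
    CoprodI.lift_of (M := boolFamily G₁ G₂) _ (i := false) x
  have hb : back.comp κ = MonoidHom.id _ := by
    apply Coprod.hom_ext
    · ext x
      exact h₁ x
    · ext x
      exact h₂ x
  have hbκ (g : G₁ ∗ G₂) : back (κ g) = g := DFunLike.congr_fun hb g
  refine ⟨κ, Coprod.toProd.comp back, Function.LeftInverse.injective hbκ, fun g => ?_, ?_⟩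
  · rw [MonoidHom.comp_apply, hbκ]
  · rintro (_ | _) x y h
    · change Coprod.toProd (back (ι₂ x)) = Coprod.toProd (back (ι₂ y)) at h
      rw [h₂, h₂, Coprod.toProd_apply_inr, Coprod.toProd_apply_inr] at h
      exact congrArg Prod.snd h
    · change Coprod.toProd (back (ι₁ x)) = Coprod.toProd (back (ι₁ y)) at h
      rw [h₁, h₁, Coprod.toProd_apply_inl, Coprod.toProd_apply_inl] at h
      exact congrArg Prod.fst h

/-- A virtually cyclic group is virtually a subgroup of `ℤ`, with a normal witness. -/
theorem exists_normal_embeds_int {V : Type*} [Group V] (C : Subgroup V) (hC : IsCyclic C)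
    (hCidx : C.FiniteIndex) :
    ∃ D : Subgroup V, D.Normal ∧ D.FiniteIndex ∧
      ∃ j : D →* Multiplicative ℤ, Function.Injective j := by
  rcases finite_or_infinite C with hfin | hinf
  · have hV : Finite V := Finite.of_equiv _ C.groupEquivQuotientProdSubgroup.symm
    refine ⟨⊥, inferInstance, inferInstance, 1, Function.injective_of_subsingleton _⟩
  · refine ⟨C.normalCore, inferInstance, inferInstance,
      (intCyclicMulEquiv (G := C)).symm.toMonoidHom.comp (Subgroup.inclusion C.normalCore_le), ?_⟩
    exact (intCyclicMulEquiv (G := C)).symm.injective.comp (Subgroup.inclusion_injective _)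

/-- Let `G₁`, `G₂` be countable groups, `π : G₁ ∗ G₂ →* G₁ × G₂` the canonical
surjective homomorphism from the free product to the direct product, and `V` a
virtually cyclic subgroup of `G₁ × G₂` (i.e. `V` has a cyclic subgroup `C` of
finite index).  Then there are a countable free group `F` (i.e. a free group
`FreeGroup S` on a countable set `S`) and a finite group `H` such that
`π⁻¹ V` embeds into the wreath product `F ≀ H`. -/
theorem comap_virtually_cyclic_embeds_wreath
    {G₁ G₂ : Type} [Group G₁] [Group G₂] [Countable G₁] [Countable G₂]
    (V : Subgroup (G₁ × G₂)) (C : Subgroup ↥V) (hC : IsCyclic ↥C)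
    (hCidx : C.FiniteIndex) :
    ∃ (S : Type) (_ : Countable S) (H : Type) (iH : Group H) (_ : Finite H)
      (ψ : ↥(Subgroup.comap (Coprod.toProd : G₁ ∗ G₂ →* G₁ × G₂) V) →*
        @Wreath (FreeGroup S) H _ iH),
      Function.Injective ψ := by
  classical
  obtain ⟨D₀, hD₀, hD₀fin, j₀, hj₀⟩ := exists_normal_embeds_int C hC hCidx
  let D : Subgroup (G₁ × G₂) := D₀.map V.subtype
  let eD : D₀ ≃* D := D₀.equivMapOfInjective V.subtype V.subtype_injective
  obtain ⟨c, hc, hc1⟩ := exists_faithful_cocycle D (j₀.comp eD.symm.toMonoidHom)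
    (hj₀.comp eD.symm.injective)
  obtain ⟨κ, θ, hκ, hθκ, hθ⟩ := exists_coprod_to_coprodI G₁ G₂
  obtain ⟨c', hc', hc'1⟩ := exists_coprod_cocycle θ hθ c hc hc1
  obtain ⟨f, hf⟩ := exists_injective_coprodI_freeGroup Bool (Option ((G₁ × G₂) ⧸ D))
  -- The inclusion of `V ⧸ D` into `(G₁ × G₂) ⧸ D`.
  let inc : V ⧸ D₀ → (G₁ × G₂) ⧸ D := Quotient.map' V.subtype (by
    intro a b hab
    rw [QuotientGroup.leftRel_apply] at hab ⊢
    exact ⟨a⁻¹ * b, hab, rfl⟩)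
  have hinc (v : V) (k : V ⧸ D₀) : inc ((v : V ⧸ D₀) * k) = (v : G₁ × G₂) • inc k := by
    induction k using QuotientGroup.induction_on
    rfl
  let p : ↥(Subgroup.comap (Coprod.toProd : G₁ ∗ G₂ →* G₁ × G₂) V) →* V :=
    { toFun := fun g => ⟨Coprod.toProd g.1, g.2⟩
      map_one' := Subtype.ext (map_one Coprod.toProd)
      map_mul' := fun a b => Subtype.ext (map_mul Coprod.toProd a.1 b.1) }
  have hp (g) : θ (κ g.1) = (p g : G₁ × G₂) := hθκ g.1
  have hcoc (g g' : ↥(Subgroup.comap (Coprod.toProd : G₁ ∗ G₂ →* G₁ × G₂) V)) (k : V ⧸ D₀) :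
      c' (κ (g * g').1) (inc k) =
        c' (κ g.1) (inc ((p g' : V ⧸ D₀) * k)) * c' (κ g'.1) (inc k) := by
    rw [hinc, ← hp, ← hc', ← map_mul]
    rfl
  let ψ : ↥(Subgroup.comap (Coprod.toProd : G₁ ∗ G₂ →* G₁ × G₂) V) →*
      Wreath (FreeGroup (Bool × Option ((G₁ × G₂) ⧸ D))) (V ⧸ D₀) :=
    MonoidHom.mk' (fun g => ⟨fun k => f (c' (κ g.1) (inc ((p g : V ⧸ D₀)⁻¹ * k))), (p g : V ⧸ D₀)⟩)
      (by
        intro g g'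
        apply SemidirectProduct.ext
        · funext k
          change f _ = f (c' (κ g.1) (inc ((p g : V ⧸ D₀)⁻¹ * k))) *
            f (c' (κ g'.1) (inc ((p g' : V ⧸ D₀)⁻¹ * ((p g : V ⧸ D₀)⁻¹ * k))))
          rw [← map_mul, hcoc, map_mul p, QuotientGroup.mk_mul, mul_inv_rev]
          simp only [mul_assoc, mul_inv_cancel_left]
        · change ((p (g * g') : V) : V ⧸ D₀) = (p g : V ⧸ D₀) * (p g' : V ⧸ D₀)
          rw [map_mul, QuotientGroup.mk_mul])
  refine ⟨Bool × Option ((G₁ × G₂) ⧸ D), ?_, V ⧸ D₀, inferInstance, inferInstance, ψ, ?_⟩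
  · have : Countable ((G₁ × G₂) ⧸ D) := Quotient.countable
    infer_instance
  · rw [injective_iff_map_eq_one]
    intro g hg
    have h1 : f (c' (κ g.1) (inc ((p g : V ⧸ D₀)⁻¹ * 1))) = 1 :=
      congrFun (congrArg SemidirectProduct.left hg) 1
    rw [← map_one f] at h1
    have h2 := hc'1 _ _ (hf h1)
    rw [← map_one κ] at h2
    exact Subtype.ext (hκ h2)
end

section
/- Let F be a free group and let S be a subgroup of the direct product ℤ × F. If S is not a free group, then the center of S is nontrivial, i.e. there exists x ∈ S with x ≠ 1 such that x commutes with every element of S. -/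
/-!
Consider the projection `S → F`. If it is injective, then `S` is isomorphic to a subgroup of the
free group `F`, hence free by the Nielsen–Schreier theorem. Otherwise its kernel contains a
nontrivial element, which lies in `ℤ × 1` and is therefore central.
-/

/-- Let `F` be a free group and `S` a subgroup of the direct product `ℤ × F`
(with `ℤ` written multiplicatively).  If `S` is not a free group, then the
center of `S` is nontrivial: there is `x ∈ S`, `x ≠ 1`, commuting with every
element of `S`. -/
theorem nonfree_subgroup_of_int_prod_free_has_center
    {F : Type*} [Group F] (hF : IsFreeGroup F)
    (S : Subgroup (Multiplicative ℤ × F)) (hS : ¬ IsFreeGroup ↥S) :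
    ∃ x : ↥S, x ≠ 1 ∧ ∀ y : ↥S, x * y = y * x := by
  let p : ↥S →* F := (MonoidHom.snd (Multiplicative ℤ) F).comp S.subtype
  have hp : ¬ Function.Injective p := fun h =>
    hS (IsFreeGroup.ofMulEquiv (MonoidHom.ofInjective h).symm)
  rw [injective_iff_map_eq_one] at hp
  push Not at hp
  obtain ⟨x, hx, hx1⟩ := hp
  have hx2 : (x : Multiplicative ℤ × F).2 = 1 := hx
  refine ⟨x, hx1, fun y => Subtype.ext (Prod.ext ?_ ?_)⟩
  · exact mul_comm _ _
  · simp [hx2]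
end

section
/- Let X be a metric space and G a group acting on X by isometries such that the action is free and properly discontinuous in the strong sense that every point of X has an open neighborhood U with U ∩ gU = ∅ for all g ∈ G, g ≠ 1. Let H be a finite group and define an action of the wreath product G ≀ H on the product space X^H (functions H → X) by ((f, a) • m)(h) = f(h) • m(a⁻¹ · h) for (f, a) ∈ G ≀ H and m : H → X. Then this is a group action, it is by isometries with respect to the sup product metric on X^H, and it is properly discontinuous in the sense that for all m, n ∈ X^H there exist open neighborhoods U of m and V of n in X^H such that the set { γ ∈ G ≀ H : (γ • U) ∩ V ≠ ∅ } is finite. -/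
/-- The action of the wreath product `G ≀ H` on the product space `X^H`
(for `G` acting on `X`), given by `((f, a) • m) h = f h • m (a⁻¹ * h)`. -/
def wreathAct {X G H : Type*} [Group G] [Group H] [SMul G X]
    (γ : Wreath G H) (m : H → X) : H → X :=
  fun h => γ.left h • m (γ.right⁻¹ * h)

/-- Separation of orbits: at most one translate of `x` lies within `ε / 2` of a point `y`, where
`ε` depends on `x` only. -/
lemma exists_unique_translate {X G : Type*} [MetricSpace X] [Group G] [MulAction G X]
    (hiso : ∀ g : G, Isometry fun x : X => g • x)
    (hpd : ∀ x : X, ∃ U : Set X, IsOpen U ∧ x ∈ U ∧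
      ∀ g : G, g ≠ 1 → U ∩ (fun y : X => g • y) '' U = ∅) (x : X) :
    ∃ ε > 0, ∀ (y : X) (g g' : G),
      dist (g • x) y < ε / 2 → dist (g' • x) y < ε / 2 → g = g' := by
  obtain ⟨U, hU, hxU, hdisj⟩ := hpd x
  obtain ⟨ε, hε, hball⟩ := Metric.isOpen_iff.1 hU x hxU
  refine ⟨ε, hε, fun y g g' hg hg' => ?_⟩
  by_contra hne
  have h1 : g⁻¹ * g' ≠ 1 := fun h => hne (inv_mul_eq_one.1 h)
  have h2 : dist ((g⁻¹ * g') • x) x < ε := by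
    have h3 := (hiso g).dist_eq ((g⁻¹ * g') • x) x
    simp only [smul_smul, mul_inv_cancel_left] at h3
    rw [← h3]
    linarith [dist_triangle_right (g' • x) (g • x) y]
  have h4 : (g⁻¹ * g') • x ∈ U ∩ (fun y : X => (g⁻¹ * g') • y) '' U :=
    ⟨hball h2, x, hxU, rfl⟩
  rw [hdisj _ h1] at h4
  exact h4

lemma wreathAct_isometry {X G H : Type*} [MetricSpace X] [Group G] [MulAction G X]
    [Group H] [Fintype H] (hiso : ∀ g : G, Isometry fun x : X => g • x) (γ : Wreath G H) :
    Isometry (wreathAct (X := X) γ) := by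
  refine Isometry.of_dist_eq fun m m' => ?_
  have key : ∀ h, dist (wreathAct γ m h) (wreathAct γ m' h) =
      dist (m (γ.right⁻¹ * h)) (m' (γ.right⁻¹ * h)) := fun h => (hiso (γ.left h)).dist_eq _ _
  apply le_antisymm
  · refine (dist_pi_le_iff dist_nonneg).2 fun h => ?_
    rw [key]
    exact dist_le_pi_dist m m' _
  · refine (dist_pi_le_iff dist_nonneg).2 fun h => ?_
    have := dist_le_pi_dist (wreathAct γ m) (wreathAct γ m') (γ.right * h)
    rwa [key, inv_mul_cancel_left] at this

/-- Let `G` act on a metric space `X` by isometries, freely and properly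
discontinuously in the strong sense that every point has an open neighborhood
`U` with `U ∩ g • U = ∅` for all `g ≠ 1`.  Let `H` be a finite group.  Then
`((f, a) • m) h = f h • m (a⁻¹ * h)` defines a group action of the wreath
product `G ≀ H` on `X^H`, this action is by isometries for the sup product
metric on `X^H` (which is the metric of the `Pi` metric-space instance), and
it is properly discontinuous: any two points `m, n` of `X^H` have open
neighborhoods `U ∋ m`, `V ∋ n` such that only finitely many `γ ∈ G ≀ H`
satisfy `γ • U ∩ V ≠ ∅`. -/
theorem wreath_action_isometric_properly_discontinuous
    {X G : Type*} [MetricSpace X] [Group G] [MulAction G X]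
    (hiso : ∀ g : G, Isometry fun x : X => g • x)
    (hpd : ∀ x : X, ∃ U : Set X, IsOpen U ∧ x ∈ U ∧
      ∀ g : G, g ≠ 1 → U ∩ (fun y : X => g • y) '' U = ∅)
    (H : Type*) [Group H] [Fintype H] :
    ((∀ m : H → X, wreathAct (1 : Wreath G H) m = m) ∧
        ∀ (γ₁ γ₂ : Wreath G H) (m : H → X),
          wreathAct (γ₁ * γ₂) m = wreathAct γ₁ (wreathAct γ₂ m)) ∧
      (∀ γ : Wreath G H, Isometry (wreathAct (X := X) γ)) ∧
      (∀ m n : H → X, ∃ U V : Set (H → X),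
        IsOpen U ∧ m ∈ U ∧ IsOpen V ∧ n ∈ V ∧
          {γ : Wreath G H | (wreathAct γ '' U ∩ V).Nonempty}.Finite) := by
  refine ⟨⟨fun m => ?_, fun γ₁ γ₂ m => ?_⟩, wreathAct_isometry hiso, fun m n => ?_⟩
  · funext h
    simp [wreathAct]
  · funext h
    simp [wreathAct, wreathMulAut, mul_smul, mul_assoc]
  · choose ε hε huniq using exists_unique_translate hiso hpd
    obtain ⟨k, hk⟩ := Finite.exists_min fun h => ε (m h)
    have hδ : 0 < ε (m k) / 4 := by linarith [hε (m k)]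
    refine ⟨Metric.ball m (ε (m k) / 4), Metric.ball n (ε (m k) / 4), Metric.isOpen_ball,
      Metric.mem_ball_self hδ, Metric.isOpen_ball, Metric.mem_ball_self hδ, ?_⟩
    have hnear : ∀ γ : Wreath G H,
        (wreathAct γ '' Metric.ball m (ε (m k) / 4) ∩ Metric.ball n (ε (m k) / 4)).Nonempty →
        ∀ h, dist (γ.left h • m (γ.right⁻¹ * h)) (n h) < ε (m (γ.right⁻¹ * h)) / 2 := by
      rintro γ ⟨_, ⟨u, hu, rfl⟩, hv⟩ h
      rw [Metric.mem_ball] at hu hv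
      have h1 := dist_le_pi_dist (wreathAct γ m) (wreathAct γ u) h
      rw [(wreathAct_isometry hiso γ).dist_eq, dist_comm m u] at h1
      have h2 := dist_le_pi_dist (wreathAct γ u) n h
      have h3 := dist_triangle (wreathAct γ m h) (wreathAct γ u h) (n h)
      have h4 := hk (γ.right⁻¹ * h)
      change dist (wreathAct γ m h) (n h) < _
      linarith
    -- An element of the set is determined by its component in the finite group `H`.
    refine Set.Finite.of_finite_image (f := fun γ : Wreath G H => γ.right) (Set.toFinite _) ?_
    intro γ hγ γ' hγ' hr
    replace hr : γ.right = γ'.right := hr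
    refine SemidirectProduct.ext (funext fun h => ?_) hr
    have h' := hnear γ' hγ' h
    rw [← hr] at h'
    exact huniq _ (n h) _ _ (hnear γ hγ h) h'
end
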